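/- arXiv:math/0509720 — 2 statements merged into one kernel-verified Lean document; each statement's English description precedes it below -/
import Mathlib

section
/- Let n ≥ 1 and t > 0. For every x ∈ W^{n+1} and every (x',y') ∈ W^{n+1,n}, integrating q^n_t over the interlaced middle coordinates of its first argument yields the (n+1)-point Karlin–McGregor kernel: ∫_{W^n(x)} q^n_t((x,y),(x',y')) dy = p^{n+1}_t(x,x'). -/
open MeasureTheory Real

/-- The centered Gaussian density with variance `t`. -/
noncomputable def gauss (t y : ℝ) : ℝ :=
  (Real.sqrt (2 * Real.pi * t))⁻¹ * Real.exp (-y ^ 2 / (2 * t))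

/-- The Gaussian cumulative distribution function `Φ_t`. -/
noncomputable def gaussCDF (t y : ℝ) : ℝ := ∫ z in Set.Iic y, gauss t z

/-- The derivative `φ'_t` of the Gaussian density. -/
noncomputable def gaussDeriv (t y : ℝ) : ℝ :=
  -y / Real.sqrt (2 * Real.pi * t ^ 3) * Real.exp (-y ^ 2 / (2 * t))

/-- The kernel `q^n_t((x,y),(x',y'))`, a `(2n+1)×(2n+1)` block determinant. -/
noncomputable def qKer (n : ℕ) (t : ℝ) (x x' : Fin (n + 1) → ℝ) (y y' : Fin n → ℝ) : ℝ :=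
  Matrix.det (Matrix.fromBlocks
    (Matrix.of fun i j : Fin (n + 1) => gauss t (x' j - x i))
    (Matrix.of fun (i : Fin (n + 1)) (j : Fin n) =>
      gaussCDF t (y' j - x i) - (if (i : ℕ) ≤ (j : ℕ) then (1 : ℝ) else 0))
    (Matrix.of fun (i : Fin n) (j : Fin (n + 1)) => gaussDeriv t (x' j - y i))
    (Matrix.of fun i j : Fin n => gauss t (y' j - y i)))

/-- The Karlin–McGregor kernel `p^m_t(x,x') = det{φ_t(x'_j − x_i)}`. -/
noncomputable def pKer (m : ℕ) (t : ℝ) (x x' : Fin m → ℝ) : ℝ :=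
  Matrix.det (Matrix.of fun i j : Fin m => gauss t (x' j - x i))

/-- The interlacing region `W^n(x) = {y : x_1 ≤ y_1 ≤ x_2 ≤ … ≤ y_n ≤ x_{n+1}}`. -/
def WintAt (n : ℕ) (x : Fin (n + 1) → ℝ) : Set (Fin n → ℝ) :=
  {y | ∀ i : Fin n, x i.castSucc ≤ y i ∧ y i ≤ x i.succ}

/-!
By multilinearity and Fubini, integrating `q^n_t` over the product of intervals `W^n(x)`
integrates each lower row in its own variable. As `φ'_t` is the derivative of `φ_t`, and `φ_t` that
of `Φ_t`, the integrated lower row `i` has entries `φ_t(x'_j - x_i) - φ_t(x'_j - x_{i+1})` and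
`Φ_t(y'_j - x_i) - Φ_t(y'_j - x_{i+1})`. The difference of the upper rows `i` and `i + 1` is the
same except that the indicators `1{j ≥ i}` contribute an extra `-1` in the column of `y'_i`, so
subtracting it leaves the lower row `(0, e_i)`. The determinant is then that of the upper left
block.
-/

/-- The bidiagonal matrix whose row `i` is `e_i - e_{i+1}`: multiplying by it on the left takes the
differences of consecutive rows. -/
def rowDiffMatrix (R : Type*) [Ring R] (n : ℕ) : Matrix (Fin n) (Fin (n + 1)) R :=
  (1 : Matrix (Fin (n + 1)) (Fin (n + 1)) R).submatrix Fin.castSucc id -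
    (1 : Matrix (Fin (n + 1)) (Fin (n + 1)) R).submatrix Fin.succ id

/-- The matrix of the indicators `1{i ≤ j}`, which the kernel `q^n_t` subtracts from its upper right
block; its last row vanishes. -/
def stepMatrix (R : Type*) [Zero R] [One R] (n : ℕ) : Matrix (Fin (n + 1)) (Fin n) R :=
  Matrix.of fun i j => if (i : ℕ) ≤ (j : ℕ) then 1 else 0

lemma rowDiffMatrix_mul_apply {R : Type*} [Ring R] {n : ℕ} {ι : Type*}
    (M : Matrix (Fin (n + 1)) ι R) (i : Fin n) (j : ι) :
    (rowDiffMatrix R n * M) i j = M i.castSucc j - M i.succ j := by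
  simp [rowDiffMatrix, sub_mul, Matrix.mul_apply, Matrix.one_apply]

lemma rowDiffMatrix_mul_stepMatrix (R : Type*) [Ring R] (n : ℕ) :
    rowDiffMatrix R n * stepMatrix R n = 1 := by
  ext i j
  simp only [rowDiffMatrix_mul_apply, stepMatrix, Matrix.of_apply, Matrix.one_apply,
    Fin.val_castSucc, Fin.val_succ, Fin.ext_iff]
  split_ifs <;> first | omega | simp

lemma det_fromBlocks_sub_mul_of_mul_eq_one {R m n : Type*} [CommRing R] [Fintype m]
    [DecidableEq m] [Fintype n] [DecidableEq n] (A : Matrix m m R) (B : Matrix m n R)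
    {L : Matrix n m R} {U : Matrix m n R} (hLU : L * U = 1) :
    (Matrix.fromBlocks A (B - U) (L * A) (L * B)).det = A.det := by
  have hfactor : Matrix.fromBlocks A (B - U) (L * A) (L * B) =
      Matrix.fromBlocks 1 0 L 1 * Matrix.fromBlocks A (B - U) 0 1 := by
    simp [Matrix.fromBlocks_multiply, Matrix.mul_sub, hLU]
  rw [hfactor, Matrix.det_mul, Matrix.det_fromBlocks_zero₁₂, Matrix.det_fromBlocks_zero₂₁]
  simp

section FundamentalTheorem

variable {E : Type*} [NormedAddCommGroup E] [NormedSpace ℝ E] [CompleteSpace E]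

lemma setIntegral_Icc_eq_sub_of_hasDerivAt_neg {a b : ℝ} (hab : a ≤ b) {f f' : ℝ → E}
    (hderiv : ∀ s ∈ Set.Icc a b, HasDerivAt f (-f' s) s) (hint : IntegrableOn f' (Set.Icc a b)) :
    ∫ s in Set.Icc a b, f' s = f a - f b := by
  have hint' : IntervalIntegrable f' volume a b :=
    (intervalIntegrable_iff_integrableOn_Icc_of_le hab).2 hint
  have hftc : ∫ s in a..b, -f' s = f b - f a := intervalIntegral.integral_eq_sub_of_hasDerivAt
    (Set.uIcc_of_le hab ▸ hderiv) hint'.neg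
  rw [intervalIntegral.integral_neg, neg_eq_iff_eq_neg, neg_sub] at hftc
  rw [integral_Icc_eq_integral_Ioc, ← intervalIntegral.integral_of_le hab, hftc]

lemma hasDerivAt_integral_Iic {f : ℝ → E} (hf : Integrable f) {y : ℝ} (hcont : ContinuousAt f y) :
    HasDerivAt (fun u => ∫ z in Set.Iic u, f z) (f y) y := by
  have hsplit : (fun u => ∫ z in Set.Iic u, f z) =
      fun u => (∫ z in Set.Iic y, f z) + ∫ z in y..u, f z := by
    ext u
    rw [← intervalIntegral.integral_Iic_sub_Iic hf.integrableOn hf.integrableOn, add_sub_cancel]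
  rw [hsplit]
  exact (intervalIntegral.integral_hasDerivAt_right hf.intervalIntegrable
    hf.aestronglyMeasurable.stronglyMeasurableAtFilter hcont).const_add _

end FundamentalTheorem

section DeterminantIntegrals

variable {𝕜 : Type*} [RCLike 𝕜]

lemma integral_det_fromRows {m n : Type*} [Fintype m] [DecidableEq m] [Fintype n] [DecidableEq n]
    {α : n → Type*} [∀ i, MeasurableSpace (α i)] (μ : ∀ i, Measure (α i)) [∀ i, SigmaFinite (μ i)]
    (A : Matrix m (m ⊕ n) 𝕜) {f : ∀ i, m ⊕ n → α i → 𝕜} (hf : ∀ i j, Integrable (f i j) (μ i)) :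
    ∫ y, (Matrix.fromRows A (Matrix.of fun i j => f i j (y i))).det ∂Measure.pi μ =
      (Matrix.fromRows A (Matrix.of fun i j => ∫ s, f i j s ∂μ i)).det := by
  have hdet (M : Matrix (m ⊕ n) (m ⊕ n) 𝕜) :
      M.det = ∑ σ : Equiv.Perm (m ⊕ n), ((Equiv.Perm.sign σ : ℤ) : 𝕜) *
        ((∏ i, M (.inl i) (σ (.inl i))) * ∏ i, M (.inr i) (σ (.inr i))) := by
    rw [← M.det_transpose, Matrix.det_apply']
    simp only [Matrix.transpose_apply, Fintype.prod_sum_type]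
  have hprod (σ : Equiv.Perm (m ⊕ n)) :
      Integrable (fun y => ∏ i, f i (σ (.inr i)) (y i)) (Measure.pi μ) :=
    Integrable.fintype_prod_dep fun i => hf i (σ (.inr i))
  simp only [hdet, Matrix.fromRows_apply_inl, Matrix.fromRows_apply_inr, Matrix.of_apply]
  rw [integral_finsetSum _ fun σ _ => ((hprod σ).const_mul _).const_mul _]
  simp only [integral_const_mul, integral_fintype_prod_eq_prod fun i => f i _]

lemma WintAt_eq_pi_Icc (n : ℕ) (x : Fin (n + 1) → ℝ) :
    WintAt n x = Set.univ.pi fun i => Set.Icc (x i.castSucc) (x i.succ) := by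
  ext y
  exact Set.mem_univ_pi.symm

theorem setIntegral_WintAt_det_fromBlocks_sub_stepMatrix {n : ℕ} {x : Fin (n + 1) → ℝ}
    (hx : Monotone x) {f f' : Fin (n + 1) → ℝ → 𝕜} {g g' : Fin n → ℝ → 𝕜}
    (hf : ∀ j s, HasDerivAt (f j) (-f' j s) s) (hg : ∀ j s, HasDerivAt (g j) (-g' j s) s)
    (hf' : ∀ j, LocallyIntegrable (f' j)) (hg' : ∀ j, LocallyIntegrable (g' j)) :
    ∫ y in WintAt n x, (Matrix.fromBlocks (Matrix.of fun i j => f j (x i))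
        (Matrix.of (fun i j => g j (x i)) - stepMatrix 𝕜 n)
        (Matrix.of fun i j => f' j (y i)) (Matrix.of fun i j => g' j (y i))).det =
      (Matrix.of fun i j => f j (x i)).det := by
  set A : Matrix (Fin (n + 1)) (Fin (n + 1)) 𝕜 := Matrix.of fun i j => f j (x i)
  set B : Matrix (Fin (n + 1)) (Fin n) 𝕜 := Matrix.of fun i j => g j (x i)
  let I (i : Fin n) : Set ℝ := Set.Icc (x i.castSucc) (x i.succ)
  let lower (j : Fin (n + 1) ⊕ Fin n) : ℝ → 𝕜 := Sum.elim f' g' j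
  have hle (i : Fin n) : x i.castSucc ≤ x i.succ := hx i.castSucc_lt_succ.le
  have hlower (i : Fin n) (j) : IntegrableOn (lower j) (I i) := by
    rcases j with j | j
    exacts [(hf' j).integrableOn_isCompact isCompact_Icc,
      (hg' j).integrableOn_isCompact isCompact_Icc]
  have hrows (y : Fin n → ℝ) : Matrix.fromBlocks A (B - stepMatrix 𝕜 n)
        (Matrix.of fun i j => f' j (y i)) (Matrix.of fun i j => g' j (y i)) =
      Matrix.fromRows (Matrix.fromCols A (B - stepMatrix 𝕜 n))
        (Matrix.of fun i j => lower j (y i)) := by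
    ext (i | i) (j | j) <;> rfl
  have hintegrated : (Matrix.of fun i j => ∫ s in I i, lower j s) =
      Matrix.fromCols (rowDiffMatrix 𝕜 n * A) (rowDiffMatrix 𝕜 n * B) := by
    ext i (j | j)
    · rw [Matrix.fromCols_apply_inl, rowDiffMatrix_mul_apply]
      exact setIntegral_Icc_eq_sub_of_hasDerivAt_neg (hle i) (fun s _ => hf j s) (hlower i (.inl j))
    · rw [Matrix.fromCols_apply_inr, rowDiffMatrix_mul_apply]
      exact setIntegral_Icc_eq_sub_of_hasDerivAt_neg (hle i) (fun s _ => hg j s) (hlower i (.inr j))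
  simp only [hrows]
  rw [WintAt_eq_pi_Icc, volume_pi, Measure.restrict_pi_pi, integral_det_fromRows _ _ hlower,
    hintegrated, Matrix.fromRows_fromCols_eq_fromBlocks,
    det_fromBlocks_sub_mul_of_mul_eq_one A B (rowDiffMatrix_mul_stepMatrix 𝕜 n)]

end DeterminantIntegrals

section Gaussian

lemma continuous_gauss (t : ℝ) : Continuous (gauss t) := by
  unfold gauss
  fun_prop

lemma continuous_gaussDeriv (t : ℝ) : Continuous (gaussDeriv t) := by
  unfold gaussDeriv
  fun_prop

variable {t : ℝ}

lemma integrable_gauss (ht : 0 < t) : Integrable (gauss t) := by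
  have hpdf : gauss t = ProbabilityTheory.gaussianPDFReal 0 t.toNNReal := by
    ext y
    simp [gauss, ProbabilityTheory.gaussianPDFReal, ht.le]
  exact hpdf ▸ ProbabilityTheory.integrable_gaussianPDFReal 0 _

lemma hasDerivAt_gauss (ht : 0 < t) (y : ℝ) : HasDerivAt (gauss t) (gaussDeriv t y) y := by
  have hexponent : HasDerivAt (fun y : ℝ => -y ^ 2 / (2 * t)) (-(2 * y) / (2 * t)) y := by
    simpa using (hasDerivAt_pow 2 y).neg.div_const (2 * t)
  have hsqrt : √(2 * π * t ^ 3) = t * √(2 * π * t) := by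
    rw [show 2 * π * t ^ 3 = t ^ 2 * (2 * π * t) by ring, sqrt_mul (by positivity), sqrt_sq ht.le]
  refine (hexponent.exp.const_mul (√(2 * π * t))⁻¹).congr_deriv ?_
  rw [gaussDeriv, hsqrt]
  field_simp

lemma hasDerivAt_gaussCDF (ht : 0 < t) (y : ℝ) : HasDerivAt (gaussCDF t) (gauss t y) y :=
  hasDerivAt_integral_Iic (integrable_gauss ht) (continuous_gauss t).continuousAt

end Gaussian

theorem stmt5_general (n : ℕ) {t : ℝ} (ht : 0 < t) {x : Fin (n + 1) → ℝ} (hx : Monotone x)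
    (x' : Fin (n + 1) → ℝ) (y' : Fin n → ℝ) :
    ∫ y in WintAt n x, qKer n t x x' y y' = pKer (n + 1) t x x' :=
  setIntegral_WintAt_det_fromBlocks_sub_stepMatrix hx
    (f := fun j s => gauss t (x' j - s)) (g := fun j s => gaussCDF t (y' j - s))
    (fun j s => (hasDerivAt_gauss ht (x' j - s)).comp_const_sub (x' j) s)
    (fun j s => (hasDerivAt_gaussCDF ht (y' j - s)).comp_const_sub (y' j) s)
    (fun j => ((continuous_gaussDeriv t).comp (continuous_sub_left (x' j))).locallyIntegrable)
    (fun j => ((continuous_gauss t).comp (continuous_sub_left (y' j))).locallyIntegrable)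

/-- Integrating `q^n_t` over the interlaced middle coordinates of its first argument
yields the `(n+1)`-point Karlin–McGregor kernel. -/
theorem stmt5 (n : ℕ) (hn : 1 ≤ n) (t : ℝ) (ht : 0 < t)
    (x x' : Fin (n + 1) → ℝ) (y' : Fin n → ℝ)
    (hx : Monotone x) (hx'y' : ∀ i : Fin n, x' i.castSucc ≤ y' i ∧ y' i ≤ x' i.succ) :
    ∫ y in WintAt n x, qKer n t x x' y y' = pKer (n + 1) t x x' :=
  stmt5_general n ht hx x' y'
end

section
/- Fix n ≥ 1 and x' ∈ ℝ^n. The function (t,x) ↦ r_t(x,x') is smooth on (0,∞)×ℝ^n and satisfies the heat equation (1/2) Σ_{i=1}^n ∂²r_t/∂x_i²(x,x') = ∂r_t/∂t(x,x'); moreover, for any i ∈ {2,…,n}, at every point with x_i = x_{i−1} the partial derivative ∂r_t/∂x_i(x,x') vanishes. -/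
open MeasureTheory Real

/-- `Φ^{(m)}_t` for `m : ℤ`: for `m ≥ 1` the `m`-th iterated integral of the Gaussian
density `φ_t`, for `m = 0` the density itself, and for `m ≤ −1` the `(−m)`-th derivative
of `φ_t`. -/
noncomputable def PhiIter (t : ℝ) (m : ℤ) (y : ℝ) : ℝ :=
  if 1 ≤ m then
    ∫ x in Set.Iic y, ((y - x) ^ (m - 1).toNat / (Nat.factorial (m - 1).toNat : ℝ)) * gauss t x
  else iteratedDeriv (-m).toNat (fun z => gauss t z) y

/-- The kernel `r_t(x,x') = det{Φ^{(i−j)}_t(x'_j − x_i)}`. -/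
noncomputable def rKer (n : ℕ) (t : ℝ) (x x' : Fin n → ℝ) : ℝ :=
  Matrix.det (Matrix.of fun i j : Fin n => PhiIter t ((i : ℤ) - (j : ℤ)) (x' j - x i))


/-!
By Gaussian scaling `Φ^{(m)}_t(y) = √t ^ (m - 1) Φ^{(m)}_1(y / √t)`, so joint smoothness follows
from smoothness in `y`. Combined with the ladder `∂_y Φ^{(m)}_t = Φ^{(m-1)}_t` and the recurrence
`m Φ^{(m+1)}_t = y Φ^{(m)}_t + t Φ^{(m-1)}_t`, the same formula yields the heat equation
`∂_t Φ^{(m)}_t = (1/2) Φ^{(m-2)}_t` for all integers `m` at once. The determinant `r_t` is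
multilinear in its rows and `x_i` enters only the `i`-th one, hence `r_t` satisfies the heat
equation as well. Differentiating in `x_i` lowers the index of the `i`-th row by one and changes
its sign: for `x_i = x_{i-1}` it becomes a multiple of the preceding row.
-/

open Filter Set Topology

open scoped ContDiff Nat

section IteratedIntegral

/-- The `(k + 1)`-fold integral of `f` from `-∞`, written as a single integral by Cauchy's formula
for repeated integration. -/
noncomputable def iteratedIntegral (k : ℕ) (f : ℝ → ℝ) (y : ℝ) : ℝ :=
  ∫ x in Iic y, (y - x) ^ k / (k ! : ℝ) * f x

/-- All moments of `f` converge at `-∞`, so that all its iterated integrals from `-∞` exist. -/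
def HasLeftMoments (f : ℝ → ℝ) : Prop :=
  ∀ (j : ℕ) (a : ℝ), IntegrableOn (fun x => x ^ j * f x) (Iic a)

namespace HasLeftMoments

variable {f : ℝ → ℝ}

theorem const_mul (hf : HasLeftMoments f) (c : ℝ) : HasLeftMoments fun x => c * f x := by
  intro j a
  simpa only [IntegrableOn, mul_left_comm] using (hf j a).const_mul c

theorem id_mul (hf : HasLeftMoments f) : HasLeftMoments fun x => x * f x := by
  intro j a
  simpa only [pow_succ, mul_assoc] using hf (j + 1) a

theorem integrableOn (hf : HasLeftMoments f) (a : ℝ) : IntegrableOn f (Iic a) := by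
  simpa only [pow_zero, one_mul] using hf 0 a

theorem integrableOn_sub_pow_mul (hf : HasLeftMoments f) (k : ℕ) (y a : ℝ) :
    IntegrableOn (fun x => (y - x) ^ k * f x) (Iic a) := by
  induction k generalizing f with
  | zero => simpa only [pow_zero, one_mul] using hf.integrableOn a
  | succ k ih =>
    refine (((ih hf).const_mul y).sub (ih hf.id_mul)).congr (.of_forall fun x => ?_)
    simp only [Pi.sub_apply]
    ring

theorem integrableOn_cauchyKernel_mul (hf : HasLeftMoments f) (k : ℕ) (y a : ℝ) :
    IntegrableOn (fun x => (y - x) ^ k / (k ! : ℝ) * f x) (Iic a) := by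
  simpa only [IntegrableOn, div_mul_eq_mul_div] using
    (hf.integrableOn_sub_pow_mul k y a).div_const (k ! : ℝ)

end HasLeftMoments

theorem iteratedIntegral_zero (f : ℝ → ℝ) (y : ℝ) :
    iteratedIntegral 0 f y = ∫ x in Iic y, f x := by
  simp [iteratedIntegral]

theorem iteratedIntegral_const_mul (k : ℕ) (c : ℝ) (f : ℝ → ℝ) (y : ℝ) :
    iteratedIntegral k (fun x => c * f x) y = c * iteratedIntegral k f y := by
  simp only [iteratedIntegral, mul_left_comm, integral_const_mul]

theorem iteratedIntegral_comp_mul_left (k : ℕ) (f : ℝ → ℝ) {c : ℝ} (hc : 0 < c) (y : ℝ) :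
    iteratedIntegral k (fun x => f (c * x)) y = (c ^ (k + 1))⁻¹ * iteratedIntegral k f (c * y) := by
  have hsubst := Measure.setIntegral_comp_smul_of_pos volume
    (fun x => (c * y - x) ^ k / (k ! : ℝ) * f x) (Iic y) hc
  simp only [Module.finrank_self, pow_one, smul_eq_mul, LinearOrderedField.smul_Iic hc,
    ← mul_sub, mul_pow, mul_div_assoc, mul_assoc, integral_const_mul] at hsubst
  simp only [iteratedIntegral]
  rw [pow_succ, mul_inv, mul_assoc, ← hsubst, inv_mul_cancel_left₀ (pow_ne_zero k hc.ne')]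

variable {f f' : ℝ → ℝ}

theorem integral_Iic_of_hasDerivAt_of_integrableOn {a : ℝ}
    (hderiv : ∀ x ∈ Iic a, HasDerivAt f (f' x) x)
    (hf : IntegrableOn f (Iic a)) (hf' : IntegrableOn f' (Iic a)) :
    ∫ x in Iic a, f' x = f a := by
  have hlim : Tendsto f atBot (𝓝 0) :=
    tendsto_zero_of_hasDerivAt_of_integrableOn_Iic hderiv hf' hf
  simpa only [sub_zero] using
    integral_Iic_of_hasDerivAt_of_tendsto' hderiv hf' hlim

theorem iteratedIntegral_succ_of_hasDerivAt (hderiv : ∀ x, HasDerivAt f (f' x) x)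
    (hf : HasLeftMoments f) (hf' : HasLeftMoments f') (k : ℕ) (y : ℝ) :
    iteratedIntegral (k + 1) f' y = iteratedIntegral k f y := by
  have hprod (x : ℝ) : HasDerivAt (fun x => (y - x) ^ (k + 1) / ((k + 1)! : ℝ) * f x)
      ((y - x) ^ (k + 1) / ((k + 1)! : ℝ) * f' x - (y - x) ^ k / (k ! : ℝ) * f x) x := by
    have hpow := (((hasDerivAt_id x).const_sub y).fun_pow (k + 1)).div_const ((k + 1)! : ℝ)
    refine (hpow.mul (hderiv x)).congr_deriv ?_
    simp only [id_eq, Nat.factorial_succ, Nat.add_sub_cancel]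
    push_cast
    field_simp
    ring
  have hf'_int := hf'.integrableOn_cauchyKernel_mul (k + 1) y y
  have hf_int := hf.integrableOn_cauchyKernel_mul k y y
  have hparts := integral_Iic_of_hasDerivAt_of_integrableOn (fun x _ => hprod x)
    (hf.integrableOn_cauchyKernel_mul (k + 1) y y) (hf'_int.sub hf_int)
  rw [integral_sub hf'_int hf_int, sub_self, zero_pow k.succ_ne_zero, zero_div, zero_mul] at hparts
  exact sub_eq_zero.mp hparts

theorem iteratedIntegral_succ (hf : HasLeftMoments f) (k : ℕ) (y : ℝ) :
    iteratedIntegral (k + 1) f y =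
      (y * iteratedIntegral k f y - iteratedIntegral k (fun x => x * f x) y) / (k + 1) := by
  simp only [iteratedIntegral]
  rw [← integral_const_mul, ← integral_sub
    ((hf.integrableOn_cauchyKernel_mul k y y).const_mul y)
    (hf.id_mul.integrableOn_cauchyKernel_mul k y y), ← integral_div]
  congr 1 with x
  rw [Nat.factorial_succ]
  push_cast
  field_simp
  ring

theorem hasDerivAt_iteratedIntegral_zero (hcont : Continuous f)
    (hf : ∀ a, IntegrableOn f (Iic a)) (y : ℝ) : HasDerivAt (iteratedIntegral 0 f) (f y) y := by
  have hsplit : iteratedIntegral 0 f = fun z => (∫ x in Iic y, f x) + ∫ x in y..z, f x := by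
    funext z
    rw [iteratedIntegral_zero,
      ← intervalIntegral.integral_Iic_sub_Iic (hf y) (hf z),
      add_sub_cancel]
  rw [hsplit]
  exact (hcont.integral_hasStrictDerivAt y y).hasDerivAt.const_add _

-- Expanding one factor `y - x` reduces `k + 1` to `k` for the integrands `f` and `x f`, which
-- avoids differentiating under the integral sign.
theorem hasDerivAt_iteratedIntegral_succ (hcont : Continuous f) (hf : HasLeftMoments f) (k : ℕ)
    (y : ℝ) : HasDerivAt (iteratedIntegral (k + 1) f) (iteratedIntegral k f y) y := by
  induction k generalizing f with
  | zero =>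
    have h := ((hasDerivAt_id y).mul (hasDerivAt_iteratedIntegral_zero hcont hf.integrableOn y)).sub
      (hasDerivAt_iteratedIntegral_zero (continuous_id.mul hcont) hf.id_mul.integrableOn y)
    rw [funext (iteratedIntegral_succ hf 0)]
    refine (h.div_const _).congr_deriv ?_
    simp
  | succ k ih =>
    have h := ((hasDerivAt_id y).mul (ih hcont hf)).sub
      (ih (f := fun x => x * f x) (by fun_prop) hf.id_mul)
    rw [funext (iteratedIntegral_succ hf (k + 1))]
    refine (h.div_const _).congr_deriv ?_
    have hrec := iteratedIntegral_succ hf k y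
    push_cast
    simp only [id_eq]
    field_simp at hrec ⊢
    linear_combination -hrec

end IteratedIntegral

section Gauss

theorem hasDerivAt_gauss_s12 (t y : ℝ) : HasDerivAt (gauss t) (-(y / t) * gauss t y) y := by
  have hexponent : HasDerivAt (fun z : ℝ => -z ^ 2 / (2 * t)) (-(y / t)) y := by
    refine (((hasDerivAt_pow 2 y).neg).div_const (2 * t)).congr_deriv ?_
    simp [neg_div, mul_div_mul_left]
  refine (hexponent.exp.const_mul (√(2 * π * t))⁻¹).congr_deriv ?_
  rw [gauss]
  ring

theorem contDiff_gauss (t : ℝ) : ContDiff ℝ ∞ (gauss t) := by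
  unfold gauss
  fun_prop

theorem gauss_eq_mul_gauss_one {t : ℝ} (ht : 0 < t) (y : ℝ) :
    gauss t y = (√t)⁻¹ * gauss 1 ((√t)⁻¹ * y) := by
  have hexponent : -((√t)⁻¹ * y) ^ 2 / (2 * 1) = -y ^ 2 / (2 * t) := by
    rw [mul_pow, inv_pow, sq_sqrt ht.le]
    field_simp
  rw [gauss, gauss, hexponent, sqrt_mul (by positivity) t, mul_one, mul_inv_rev, mul_assoc]

theorem hasLeftMoments_gauss {t : ℝ} (ht : 0 < t) : HasLeftMoments (gauss t) := by
  intro j a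
  have hint := integrable_rpow_mul_exp_neg_mul_sq (b := 1 / (2 * t)) (by positivity)
    (s := (j : ℝ)) (neg_one_lt_zero.trans_le j.cast_nonneg)
  refine (hint.const_mul (√(2 * π * t))⁻¹).integrableOn.congr_fun (fun x _ => ?_)
    measurableSet_Iic
  simp only [gauss, rpow_natCast, mul_left_comm]
  congr 3
  ring

theorem iteratedDeriv_gauss_eq {t : ℝ} (ht : 0 < t) (k : ℕ) (y : ℝ) :
    iteratedDeriv k (gauss t) y = (√t)⁻¹ ^ (k + 1) * iteratedDeriv k (gauss 1) ((√t)⁻¹ * y) := by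
  rw [funext (gauss_eq_mul_gauss_one ht), iteratedDeriv_const_mul_field,
    iteratedDeriv_comp_const_mul ((contDiff_gauss 1).of_le (mod_cast le_top)), pow_succ']
  ring

theorem iteratedIntegral_gauss_eq {t : ℝ} (ht : 0 < t) (k : ℕ) (y : ℝ) :
    iteratedIntegral k (gauss t) y = √t ^ k * iteratedIntegral k (gauss 1) ((√t)⁻¹ * y) := by
  rw [funext (gauss_eq_mul_gauss_one ht), iteratedIntegral_const_mul,
    iteratedIntegral_comp_mul_left k _ (by positivity)]
  have hsqrt_ne : √t ≠ 0 := by positivity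
  rw [inv_pow, inv_inv, pow_succ', ← mul_assoc, inv_mul_cancel_left₀ hsqrt_ne]

end Gauss

section PhiIter

theorem phiIter_natCast_add_one (t : ℝ) (k : ℕ) :
    PhiIter t (k + 1) = iteratedIntegral k (gauss t) := by
  funext y
  simp [PhiIter, iteratedIntegral]

theorem phiIter_neg_natCast (t : ℝ) (k : ℕ) : PhiIter t (-k) = iteratedDeriv k (gauss t) := by
  funext y
  rw [PhiIter, if_neg (by omega), neg_neg, Int.toNat_natCast]

theorem phiIter_zero (t : ℝ) : PhiIter t 0 = gauss t := by
  simpa using phiIter_neg_natCast t 0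

theorem exists_nat_eq_add_one_or_eq_neg (m : ℤ) : ∃ k : ℕ, m = k + 1 ∨ m = -k := by
  rcases lt_or_ge 0 m with hm | hm
  · exact ⟨(m - 1).toNat, by omega⟩
  · exact ⟨(-m).toNat, by omega⟩

theorem hasDerivAt_phiIter {t : ℝ} (ht : 0 < t) (m : ℤ) (y : ℝ) :
    HasDerivAt (PhiIter t m) (PhiIter t (m - 1) y) y := by
  have hcont := (contDiff_gauss t).continuous
  obtain ⟨k, rfl | rfl⟩ := exists_nat_eq_add_one_or_eq_neg m
  · rw [phiIter_natCast_add_one, add_sub_cancel_right]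
    cases k with
    | zero =>
      rw [Nat.cast_zero, phiIter_zero]
      exact hasDerivAt_iteratedIntegral_zero hcont (hasLeftMoments_gauss ht).integrableOn y
    | succ k =>
      rw [Nat.cast_succ, phiIter_natCast_add_one]
      exact hasDerivAt_iteratedIntegral_succ hcont (hasLeftMoments_gauss ht) k y
  · have hpred : -(k : ℤ) - 1 = -((k + 1 : ℕ) : ℤ) := by push_cast; ring
    rw [hpred, phiIter_neg_natCast, phiIter_neg_natCast, iteratedDeriv_succ]
    exact ((contDiff_gauss t).differentiable_iteratedDeriv k
      (mod_cast WithTop.coe_lt_top _) y).hasDerivAt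

theorem iteratedIntegral_id_mul_gauss {t : ℝ} (ht : 0 < t) (k : ℕ) (y : ℝ) :
    iteratedIntegral k (fun x => x * gauss t x) y = -(t * PhiIter t k y) := by
  have hmom := hasLeftMoments_gauss ht
  have hderiv (x : ℝ) : HasDerivAt (fun x => -t * gauss t x) (x * gauss t x) x := by
    refine ((hasDerivAt_gauss_s12 t x).const_mul (-t)).congr_deriv ?_
    field_simp
  cases k with
  | zero =>
    rw [iteratedIntegral_zero, integral_Iic_of_hasDerivAt_of_integrableOn (fun x _ => hderiv x)
      ((hmom.const_mul _).integrableOn y) (hmom.id_mul.integrableOn y), Nat.cast_zero,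
      phiIter_zero, neg_mul]
  | succ k =>
    rw [iteratedIntegral_succ_of_hasDerivAt hderiv (hmom.const_mul _) hmom.id_mul,
      iteratedIntegral_const_mul, Nat.cast_succ, phiIter_natCast_add_one, neg_mul]

theorem mul_phiIter_add_one {t : ℝ} (ht : 0 < t) (m : ℤ) (y : ℝ) :
    m * PhiIter t (m + 1) y = y * PhiIter t m y + t * PhiIter t (m - 1) y := by
  obtain ⟨k, rfl | rfl⟩ := exists_nat_eq_add_one_or_eq_neg m
  · have hrec := iteratedIntegral_succ (hasLeftMoments_gauss ht) k y
    rw [iteratedIntegral_id_mul_gauss ht, ← phiIter_natCast_add_one, ← phiIter_natCast_add_one,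
      Nat.cast_succ] at hrec
    rw [hrec, add_sub_cancel_right]
    push_cast
    field_simp
    ring
  · induction k generalizing y with
    | zero =>
      have hgauss := (hasDerivAt_phiIter ht 0 y).unique (phiIter_zero t ▸ hasDerivAt_gauss_s12 t y)
      rw [Nat.cast_zero, neg_zero, hgauss, phiIter_zero]
      push_cast
      field_simp
      ring
    | succ k ih =>
      have hleft := (hasDerivAt_phiIter ht (-k + 1) y).const_mul ((-k : ℤ) : ℝ)
      have hright := ((hasDerivAt_id y).mul (hasDerivAt_phiIter ht (-k) y)).add
        ((hasDerivAt_phiIter ht (-k - 1) y).const_mul t)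
      have hderiv := (hleft.congr_of_eventuallyEq (.of_forall fun z => (ih z).symm)).unique hright
      have hpred : -((k + 1 : ℕ) : ℤ) = -(k : ℤ) - 1 := by push_cast; ring
      rw [add_sub_cancel_right] at hderiv
      rw [hpred, sub_add_cancel]
      push_cast at hderiv ⊢
      simp only [id_eq] at hderiv
      linear_combination hderiv

theorem phiIter_eq_zpow_mul {t : ℝ} (ht : 0 < t) (m : ℤ) (y : ℝ) :
    PhiIter t m y = √t ^ (m - 1) * PhiIter 1 m ((√t)⁻¹ * y) := by
  obtain ⟨k, rfl | rfl⟩ := exists_nat_eq_add_one_or_eq_neg m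
  · simp only [phiIter_natCast_add_one, iteratedIntegral_gauss_eq ht, add_sub_cancel_right,
      zpow_natCast]
  · have hexp : -(k : ℤ) - 1 = -((k + 1 : ℕ) : ℤ) := by push_cast; ring
    rw [phiIter_neg_natCast, phiIter_neg_natCast, iteratedDeriv_gauss_eq ht, hexp, zpow_neg,
      zpow_natCast, inv_pow]

theorem contDiff_phiIter {t : ℝ} (ht : 0 < t) (m : ℤ) : ContDiff ℝ ∞ (PhiIter t m) := by
  refine contDiff_infty.mpr fun n => ?_
  induction n generalizing m with
  | zero =>
    exact contDiff_zero.mpr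
      (continuous_iff_continuousAt.mpr fun y => (hasDerivAt_phiIter ht m y).continuousAt)
  | succ n ih =>
    have hderiv : deriv (PhiIter t m) = PhiIter t (m - 1) :=
      funext fun y => (hasDerivAt_phiIter ht m y).deriv
    rw [Nat.cast_succ, contDiff_succ_iff_deriv, hderiv]
    exact ⟨fun y => (hasDerivAt_phiIter ht m y).differentiableAt, nofun, ih (m - 1)⟩

theorem contDiffOn_phiIter (m : ℤ) :
    ContDiffOn ℝ ∞ (fun p : ℝ × ℝ => PhiIter p.1 m p.2) {p | 0 < p.1} := by
  have hscaled : ContDiffOn ℝ ∞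
      (fun p : ℝ × ℝ => √p.1 ^ (m - 1) * PhiIter 1 m ((√p.1)⁻¹ * p.2)) {p | 0 < p.1} := by
    intro p (hp : 0 < p.1)
    have hsqrt : ContDiffAt ℝ ∞ (fun p : ℝ × ℝ => √p.1) p := contDiffAt_fst.sqrt hp.ne'
    have hsqrt_ne : √p.1 ≠ 0 := (sqrt_pos.mpr hp).ne'
    have hpow : ContDiffAt ℝ ∞ (fun s : ℝ => s ^ (m - 1)) (√p.1) :=
      (analyticAt_id.zpow hsqrt_ne).contDiffAt
    exact ((hpow.comp p hsqrt).mul ((contDiff_phiIter one_pos m).contDiffAt.comp p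
      ((hsqrt.inv hsqrt_ne).mul contDiffAt_snd))).contDiffWithinAt
  exact hscaled.congr fun p hp => phiIter_eq_zpow_mul hp m p.2

theorem hasDerivAt_phiIter_time {t : ℝ} (ht : 0 < t) (m : ℤ) (y : ℝ) :
    HasDerivAt (fun s => PhiIter s m y) (1 / 2 * PhiIter t (m - 2) y) t := by
  have hsqrt_ne : √t ≠ 0 := (sqrt_pos.mpr ht).ne'
  have hsqrt := hasDerivAt_sqrt ht.ne'
  have hpow := (hasDerivAt_zpow (m - 1) (√t) (.inl hsqrt_ne)).comp t hsqrt
  have hspace := (hasDerivAt_phiIter one_pos m ((√t)⁻¹ * y)).comp t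
    ((hsqrt.inv hsqrt_ne).mul_const y)
  have hscaled : (fun s => PhiIter s m y) =ᶠ[𝓝 t]
      fun s => √s ^ (m - 1) * PhiIter 1 m ((√s)⁻¹ * y) := by
    filter_upwards [eventually_gt_nhds ht] with s hs using phiIter_eq_zpow_mul hs m y
  refine ((hpow.mul hspace).congr_of_eventuallyEq hscaled).congr_deriv ?_
  have hrec := mul_phiIter_add_one one_pos (m - 1) ((√t)⁻¹ * y)
  have hpow_one : √t ^ (m - 1 - 1) = √t ^ (m - 2 - 1) * √t := by
    rw [← zpow_add_one₀ hsqrt_ne]; ring_nf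
  have hpow_two : √t ^ (m - 1) = √t ^ (m - 2 - 1) * √t * √t := by
    rw [← hpow_one, ← zpow_add_one₀ hsqrt_ne, sub_add_cancel]
  rw [sub_add_cancel, sub_sub m 1 1, one_add_one_eq_two] at hrec
  rw [phiIter_eq_zpow_mul ht (m - 2)]
  simp only [Function.comp_apply, Pi.inv_apply, hpow_one, hpow_two]
  field_simp at hrec ⊢
  linear_combination hrec

end PhiIter

section Determinant

variable {𝕜 ι : Type*} [NontriviallyNormedField 𝕜] [Fintype ι] [DecidableEq ι]

variable (𝕜 ι) in
/-- The determinant as a continuous multilinear function of the rows of a matrix, which makes the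
calculus of continuous multilinear maps available for it. -/
def detContinuousMultilinear : ContinuousMultilinearMap 𝕜 (fun _ : ι => ι → 𝕜) 𝕜 where
  toMultilinearMap := (Matrix.detRowAlternating (n := ι) (R := 𝕜)).toMultilinearMap
  cont := Continuous.matrix_det (A := fun M : ι → ι → 𝕜 => Matrix.of M) continuous_id

theorem hasDerivAt_det_of {v : 𝕜 → ι → ι → 𝕜} {v' : ι → ι → 𝕜} {t : 𝕜}
    (hv : ∀ i, HasDerivAt (fun s => v s i) (v' i) t) :
    HasDerivAt (fun s => (Matrix.of (v s)).det)
      (∑ i, ((Matrix.of (v t)).updateRow i (v' i)).det) t := by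
  have h := ((detContinuousMultilinear 𝕜 ι).hasFDerivAt (v t)).comp_hasDerivAt t
    (hasDerivAt_pi.mpr hv)
  rw [ContinuousMultilinearMap.linearDeriv_apply] at h
  exact h

theorem hasDerivAt_det_updateRow (M : Matrix ι ι 𝕜) (i : ι) {v : 𝕜 → ι → 𝕜} {v' : ι → 𝕜} {t : 𝕜}
    (hv : HasDerivAt v v' t) :
    HasDerivAt (fun s => (M.updateRow i (v s)).det) (M.updateRow i v').det t :=
  (((detContinuousMultilinear 𝕜 ι).toContinuousLinearMap M i).hasFDerivAt).comp_hasDerivAt t hv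

end Determinant

section Kernel

variable {n : ℕ} {t : ℝ} (x x' : Fin n → ℝ)

/-- The vector `(Φ^{(m-j)}_t(x'_j - a))_j`, with `j` counted from `0`. Its entries for `m = i` and
`a = x_i` form the `i`-th row of the matrix whose determinant is `r_t(x, x')`. -/
noncomputable def phiRow (t : ℝ) (m : ℤ) (a : ℝ) : Fin n → ℝ :=
  fun j => PhiIter t (m - j) (x' j - a)

/-- The matrix whose determinant is `r_t(x, x')`. -/
noncomputable def phiMatrix (t : ℝ) : Matrix (Fin n) (Fin n) ℝ :=
  Matrix.of fun i => phiRow x' t i (x i)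

theorem rKer_eq_det (t : ℝ) : rKer n t x x' = (phiMatrix x x' t).det := rfl

theorem rKer_update (t : ℝ) (i : Fin n) (a : ℝ) :
    rKer n t (Function.update x i a) x' =
      ((phiMatrix x x' t).updateRow i (phiRow x' t i a)).det := by
  rw [rKer_eq_det]
  congr 1
  ext k j
  rcases eq_or_ne k i with rfl | hk
  · simp [phiMatrix]
  · simp [phiMatrix, hk]

theorem hasDerivAt_phiRow (ht : 0 < t) (m : ℤ) (a : ℝ) :
    HasDerivAt (phiRow x' t m) (-phiRow x' t (m - 1) a) a := by
  refine hasDerivAt_pi.mpr fun j => ?_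
  have h := (hasDerivAt_phiIter ht (m - j) (x' j - a)).comp a ((hasDerivAt_id a).const_sub (x' j))
  rw [mul_neg_one, sub_right_comm] at h
  exact h

theorem hasDerivAt_phiRow_time (ht : 0 < t) (m : ℤ) (a : ℝ) :
    HasDerivAt (fun s => phiRow x' s m a) ((1 / 2 : ℝ) • phiRow x' t (m - 2) a) t := by
  refine hasDerivAt_pi.mpr fun j => ?_
  have h := hasDerivAt_phiIter_time ht (m - j) (x' j - a)
  rw [sub_right_comm] at h
  exact h

theorem hasDerivAt_rKer_update (ht : 0 < t) (i : Fin n) (a : ℝ) :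
    HasDerivAt (fun a => rKer n t (Function.update x i a) x')
      ((phiMatrix x x' t).updateRow i (-phiRow x' t (i - 1) a)).det a := by
  simp only [rKer_update]
  exact hasDerivAt_det_updateRow _ i (hasDerivAt_phiRow x' ht i a)

theorem iteratedDeriv_two_rKer_update (ht : 0 < t) (i : Fin n) (a : ℝ) :
    iteratedDeriv 2 (fun a => rKer n t (Function.update x i a) x') a =
      ((phiMatrix x x' t).updateRow i (phiRow x' t (i - 2) a)).det := by
  have hrow := (hasDerivAt_phiRow x' ht (i - 1) a).neg
  rw [neg_neg, sub_sub, one_add_one_eq_two] at hrow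
  rw [iteratedDeriv_succ, iteratedDeriv_one,
    funext fun a => (hasDerivAt_rKer_update x x' ht i a).deriv]
  exact (hasDerivAt_det_updateRow _ i hrow).deriv

theorem hasDerivAt_rKer_time (ht : 0 < t) :
    HasDerivAt (fun s => rKer n s x x')
      (∑ i, ((phiMatrix x x' t).updateRow i ((1 / 2 : ℝ) • phiRow x' t (i - 2) (x i))).det) t :=
  hasDerivAt_det_of fun i => hasDerivAt_phiRow_time x' ht i (x i)

theorem contDiffOn_rKer :
    ContDiffOn ℝ ∞ (fun p : ℝ × (Fin n → ℝ) => rKer n p.1 p.2 x') {p | 0 < p.1} := by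
  have hrows : ContDiffOn ℝ ∞
      (fun (p : ℝ × (Fin n → ℝ)) (i : Fin n) => phiRow x' p.1 i (p.2 i)) {p | 0 < p.1} := by
    refine contDiffOn_pi.mpr fun i => contDiffOn_pi.mpr fun j => ?_
    exact (contDiffOn_phiIter ((i : ℤ) - j)).comp
      (f := fun p : ℝ × (Fin n → ℝ) => (p.1, x' j - p.2 i)) (by fun_prop) fun p hp => hp
  exact (detContinuousMultilinear ℝ (Fin n)).contDiff.comp_contDiffOn hrows

theorem deriv_rKer_update_eq_zero (ht : 0 < t) {i j : Fin n} (hij : (i : ℤ) - 1 = j)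
    (hx : x i = x j) : deriv (fun a => rKer n t (Function.update x i a) x') (x i) = 0 := by
  have hne : j ≠ i := by rintro rfl; omega
  have hrow : -phiRow x' t (i - 1) (x i) = (-1 : ℝ) • phiRow x' t j (x j) := by
    rw [hij, hx, neg_one_smul]
  have hdet : ((phiMatrix x x' t).updateRow i (phiRow x' t j (x j))).det = 0 :=
    Matrix.det_zero_of_row_eq hne ((Matrix.updateRow_ne hne).trans Matrix.updateRow_self.symm)
  rw [(hasDerivAt_rKer_update x x' ht i (x i)).deriv, hrow, Matrix.det_updateRow_smul, hdet,
    mul_zero]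

end Kernel

/-- For fixed `x'`, the map `(t,x) ↦ r_t(x,x')` is smooth on `(0,∞) × ℝ^n`, satisfies the
heat equation `(1/2) Σ_i ∂²r/∂x_i² = ∂r/∂t`, and its `i`-th partial derivative in `x`
vanishes wherever `x_i = x_{i−1}`. -/
theorem stmt12 (n : ℕ) (hn : 1 ≤ n) (x' : Fin n → ℝ) :
    ContDiffOn ℝ (⊤ : ℕ∞)
      (fun p : ℝ × (Fin n → ℝ) => rKer n p.1 p.2 x') {p : ℝ × (Fin n → ℝ) | 0 < p.1} ∧
    (∀ (t : ℝ), 0 < t → ∀ x : Fin n → ℝ,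
      (1 / 2 : ℝ) * ∑ i : Fin n,
          iteratedDeriv 2 (fun a => rKer n t (Function.update x i a) x') (x i)
        = deriv (fun s => rKer n s x x') t) ∧
    (∀ (t : ℝ), 0 < t → ∀ x : Fin n → ℝ, ∀ (i : ℕ) (hi : i < n) (hi1 : 1 ≤ i),
      x ⟨i, hi⟩ = x ⟨i - 1, by omega⟩ →
      deriv (fun a => rKer n t (Function.update x ⟨i, hi⟩ a) x') (x ⟨i, hi⟩) = 0) := by
  refine ⟨contDiffOn_rKer x', fun t ht x => ?_, fun t ht x i hi hi1 hx => ?_⟩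
  · simp only [iteratedDeriv_two_rKer_update x x' ht, (hasDerivAt_rKer_time x x' ht).deriv,
      Matrix.det_updateRow_smul, Finset.mul_sum]
  · exact deriv_rKer_update_eq_zero x x' ht (by push_cast [hi1]; rfl) hx
end
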